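/- Let X be a metric space, Ω ⊂ X open, and μ an Ahlfors s-regular measure on Ω for some s ∈ (0,∞). Let (ε_n) and (η_n) be sequences of positive reals with ε_n → 0, let W ∈ L¹_loc(Ω×Ω, μ×μ), W ≥ 0, and let ζ be a gauge satisfying the four admissibility conditions, with associated Carathéodory measure ψ. Assume liminf_{n→∞} ( η_n ∫_Ω ε_n^{−s} ζ(B_{ε_n}(x)) [ ⨍_{B_{ε_n}(x)} χ_Ω(z) W(z,x) dμ(z) ] dμ(x) ) < ∞. Then the set D := { x ∈ Ω : liminf_{n→∞} η_n ⨍_{B_{ε_n/2}(x)} ⨍_{B_{ε_n/2}(x)} W(z,y) dμ(z) dμ(y) > 0 } is σ-finite with respect to ψ, and for every x ∈ Ω \ D the liminf above equals 0. -/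

import Mathlib

open MeasureTheory Metric Filter Set
open scoped ENNReal Topology

/-- The approximating measure `φ_δ` of Carathéodory's construction from the gauge `ζ`
and the family of all Borel subsets. -/
noncomputable def caraPre {X : Type*} [MetricSpace X] [MeasurableSpace X]
    (ζ : Set X → ℝ≥0∞) (δ : ℝ) (A : Set X) : ℝ≥0∞ :=
  ⨅ (G : Set (Set X)) (_ : G.Countable) (_ : ∀ S ∈ G, MeasurableSet S)
    (_ : ∀ S ∈ G, EMetric.diam S ≤ ENNReal.ofReal δ) (_ : A ⊆ ⋃₀ G),
    ∑' S : G, ζ S.1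

/-- The resulting measure `ψ = sup_{δ>0} φ_δ` of Carathéodory's construction. -/
noncomputable def caraMeas {X : Type*} [MetricSpace X] [MeasurableSpace X]
    (ζ : Set X → ℝ≥0∞) (A : Set X) : ℝ≥0∞ :=
  ⨆ (δ : ℝ) (_ : 0 < δ), caraPre ζ δ A

/-- The double average `⨍_{B_ε(x)} ⨍_{B_ε(x)} W(z,y) dμ(z) dμ(y)`. -/
noncomputable def doubleAvg {X : Type*} [MetricSpace X] [MeasurableSpace X]
    (μ : Measure X) (W : X → X → ℝ≥0∞) (x : X) (ε : ℝ) : ℝ≥0∞ :=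
  (μ (closedBall x ε))⁻¹ * (μ (closedBall x ε))⁻¹ *
    ∫⁻ z in closedBall x ε, ∫⁻ y in closedBall x ε, W z y ∂μ ∂μ

/-!
Let `ν` be the measure whose density is the integrand of the `ζ`-energy at scale `r`. Regularity of
`μ` and comparability of `ζ` on nearby balls bound `⨍⨍_{B_{r/2}(x)} W · ζ(B_r(x))` by a constant
times `ν(B_{r/2}(x))`. On a set `A` where the weighted double averages stay above `κ > 0`, choose
centres with disjoint `r/2`-balls whose `r`-balls cover `A`: adding up gives
`κ ∑ ζ(B_r(x_i)) ≲ η ν(Ω)`, which is bounded along a sequence of scales tending to zero, so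
`ψ(A) < ∞`. The set where the liminf is positive is a countable union of such sets `A`.
-/

section Caratheodory

variable {X : Type*} [MetricSpace X] [MeasurableSpace X] {ζ : Set X → ℝ≥0∞} {A : Set X}

theorem caraPre_le_tsum {ι : Type*} [Countable ι] {S : ι → Set X} {δ : ℝ}
    (hS : ∀ i, MeasurableSet (S i)) (hdiam : ∀ i, ediam (S i) ≤ ENNReal.ofReal δ)
    (hA : A ⊆ ⋃ i, S i) : caraPre ζ δ A ≤ ∑' i, ζ (S i) :=
  calc caraPre ζ δ A ≤ ∑' T : range S, ζ T :=
        iInf_le_of_le (range S) <| iInf_le_of_le (countable_range S) <|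
          iInf_le_of_le (forall_mem_range.2 hS) <| iInf_le_of_le (forall_mem_range.2 hdiam) <|
            iInf_le _ (by rwa [sUnion_range])
    _ ≤ ∑' i, ζ (S i) := by
        obtain ⟨i, hi⟩ := (rangeFactorization_surjective (f := S)).hasRightInverse
        have hζ (T : range S) : ζ T = ζ (S (i T)) := congrArg (fun T : range S => ζ T) (hi T).symm
        simp only [hζ]
        exact ENNReal.tsum_comp_le_tsum_of_injective hi.injective fun j => ζ (S j)

theorem caraMeas_empty : caraMeas ζ ∅ = 0 := by
  refine nonpos_iff_eq_zero.1 (iSup₂_le fun δ _ => ?_)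
  simpa using caraPre_le_tsum (ζ := ζ) (δ := δ) (S := (Empty.elim : Empty → Set X))
    (by simp) (by simp) (empty_subset _)

theorem caraMeas_le_of_subset_of_subsingleton {S : Set X} (hS : MeasurableSet S)
    (hsub : S.Subsingleton) (hA : A ⊆ S) : caraMeas ζ A ≤ ζ S := by
  refine iSup₂_le fun δ _ => ?_
  simpa using caraPre_le_tsum (ζ := ζ) (δ := δ) (S := fun _ : Unit => S)
    (fun _ => hS) (by simp [hsub.ediam_eq]) (by simpa [iUnion_const] using hA)

theorem caraMeas_lt_top_of_subsingleton [OpensMeasurableSpace X] {Ω : Set X} (hΩ : IsOpen Ω)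
    (hsub : Ω.Subsingleton) (hζ : ∀ᶠ r in 𝓝[>] (0 : ℝ), ∀ x, ζ (closedBall x r) < ⊤)
    (hA : A ⊆ Ω) : caraMeas ζ A < ⊤ := by
  obtain rfl | ⟨x, hx⟩ := A.eq_empty_or_nonempty
  · simp [caraMeas_empty]
  have hball : ∀ᶠ r in 𝓝[>] (0 : ℝ), closedBall x r ⊆ Ω :=
    (eventually_closedBall_subset (hΩ.mem_nhds (hA hx))).filter_mono nhdsWithin_le_nhds
  obtain ⟨r, hζr, hr, hr0⟩ := (hζ.and (hball.and self_mem_nhdsWithin)).exists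
  refine (caraMeas_le_of_subset_of_subsingleton measurableSet_closedBall (hsub.anti hr)
    fun y hy => ?_).trans_lt (hζr x)
  rw [hsub (hA hy) (hA hx)]
  exact mem_closedBall_self (le_of_lt hr0)

end Caratheodory

section Covering

theorem ediam_closedBall_le_ofReal {X : Type*} [PseudoMetricSpace X] {x : X} {r : ℝ}
    (hr : 0 ≤ r) :
    ediam (closedBall x r) ≤ ENNReal.ofReal (2 * r) := by
  rw [← closedEBall_ofReal hr, ENNReal.ofReal_mul zero_le_two, ENNReal.ofReal_ofNat]
  exact ediam_closedEBall_le

theorem exists_pairwiseDisjoint_closedBall_half_cover {X : Type*} [PseudoMetricSpace X]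
    (A : Set X) {r : ℝ} (hr : 0 ≤ r) :
    ∃ u ⊆ A, u.PairwiseDisjoint (fun x => closedBall x (r / 2)) ∧
      A ⊆ ⋃ x : u, closedBall (x : X) r := by
  obtain ⟨u, huA, hdisj, hcover⟩ := Vitali.exists_disjoint_subfamily_covering_enlargement
    (fun x : X => closedBall x (r / 2)) A (fun _ => 1) 2 one_lt_two (by simp) 1 (by simp)
    (fun x _ => nonempty_closedBall.2 (div_nonneg hr zero_le_two))
  refine ⟨u, huA, hdisj, fun x hx => ?_⟩
  obtain ⟨y, hy, ⟨z, hzx, hzy⟩, -⟩ := hcover x hx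
  refine mem_iUnion.2 ⟨⟨y, hy⟩, ?_⟩
  simp only [mem_closedBall] at hzx hzy ⊢
  linarith [dist_triangle_left x y z]

variable {X : Type*} [MetricSpace X] [MeasurableSpace X] [OpensMeasurableSpace X]
  {ζ : Set X → ℝ≥0∞} {A U : Set X}

theorem caraPre_le_measure_div {ν : Measure X} {a : ℝ≥0∞} {r δ : ℝ} (hr : 0 ≤ r)
    (hrδ : 2 * r ≤ δ) (ha : a ≠ 0) (hνU : ν U ≠ ⊤) (hAU : ∀ x ∈ A, closedBall x (r / 2) ⊆ U)
    (hpos : ∀ x ∈ A, 0 < ζ (closedBall x r))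
    (hle : ∀ x ∈ A, a * ζ (closedBall x r) ≤ ν (closedBall x (r / 2))) :
    caraPre ζ δ A ≤ ν U / a := by
  obtain ⟨u, huA, hdisj, hcover⟩ := exists_pairwiseDisjoint_closedBall_half_cover A hr
  have hsum : ∑' x : u, ζ (closedBall x r) ≤ ν U / a := by
    rw [ENNReal.le_div_iff_mul_le (.inl ha) (.inr hνU), mul_comm, ← ENNReal.tsum_mul_left]
    calc ∑' x : u, a * ζ (closedBall x r) ≤ ∑' x : u, ν (closedBall x (r / 2)) :=
          ENNReal.tsum_le_tsum fun x => hle x (huA x.2)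
      _ ≤ ν (⋃ x : u, closedBall x (r / 2)) :=
          tsum_meas_le_meas_iUnion_of_disjoint ν (fun _ => measurableSet_closedBall)
            (hdisj.subtype _ _)
      _ ≤ ν U := measure_mono (iUnion_subset fun x => hAU x (huA x.2))
  have : Countable u := by
    have hsupp := Summable.countable_support_ennreal
      (hsum.trans_lt (ENNReal.div_lt_top hνU ha)).ne
    rwa [Function.support_eq_univ fun x : u => (hpos x (huA x.2)).ne', countable_univ_iff]
      at hsupp
  exact (caraPre_le_tsum (fun _ => measurableSet_closedBall)
    (fun _ => (ediam_closedBall_le_ofReal hr).trans (ENNReal.ofReal_le_ofReal hrδ))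
    hcover).trans hsum

end Covering

section Energy

variable {X : Type*} [MetricSpace X] [MeasurableSpace X]

/-- Ahlfors `s`-regularity of `μ` at the points of `Ω`, at the single scale `r` and with
constants `c` and `C`. -/
structure AhlforsRegularAt (μ : Measure X) (Ω : Set X) (s : ℝ) (c C : ℝ≥0∞) (r : ℝ) : Prop where
  le_measure : ∀ x ∈ Ω, c * ENNReal.ofReal r ^ s ≤ μ (closedBall x r)
  measure_le : ∀ x ∈ Ω, μ (closedBall x r) ≤ C * ENNReal.ofReal r ^ s

/-- The integrand `r^{-s} ζ(B_r(x)) ⨍_{B_r(x)} χ_Ω(z) W(z,x) dμ(z)` of the `ζ`-energy of `W` at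
scale `r`. -/
noncomputable def gaugeEnergyDensity (μ : Measure X) (Ω : Set X) (s : ℝ) (W : X → X → ℝ≥0∞)
    (ζ : Set X → ℝ≥0∞) (r : ℝ) (x : X) : ℝ≥0∞ :=
  (ENNReal.ofReal r ^ s)⁻¹ * ζ (closedBall x r) *
    ((μ (closedBall x r))⁻¹ * ∫⁻ z in closedBall x r ∩ Ω, W z x ∂μ)

variable {μ : Measure X} {Ω A : Set X} {s r : ℝ} {c C b κ : ℝ≥0∞} {W : X → X → ℝ≥0∞}
  {ζ : Set X → ℝ≥0∞} {x y : X}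

theorem ofReal_rpow_pos (hr : 0 < r) : 0 < ENNReal.ofReal r ^ s :=
  ENNReal.rpow_pos (ENNReal.ofReal_pos.2 hr) ENNReal.ofReal_ne_top

theorem ofReal_rpow_ne_top (hr : 0 < r) : ENNReal.ofReal r ^ s ≠ ⊤ :=
  ENNReal.rpow_ne_top_of_ne_zero (ENNReal.ofReal_pos.2 hr).ne' ENNReal.ofReal_ne_top

theorem half_rpow_sq_mul_ne_zero (hc : c ≠ 0) (hκ : κ ≠ 0) : (c * 2⁻¹ ^ s) ^ 2 * κ ≠ 0 :=
  mul_ne_zero (pow_ne_zero 2 (mul_ne_zero hc (ENNReal.rpow_pos (by simp) (by simp)).ne')) hκ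

namespace AhlforsRegularAt

theorem measure_pos (h : AhlforsRegularAt μ Ω s c C r) (hr : 0 < r) (hc : c ≠ 0) (hx : x ∈ Ω) :
    0 < μ (closedBall x r) :=
  (ENNReal.mul_pos hc (ofReal_rpow_pos hr).ne').trans_le (h.le_measure x hx)

theorem measure_ne_top (h : AhlforsRegularAt μ Ω s c C r) (hr : 0 < r) (hC : C ≠ ⊤)
    (hx : x ∈ Ω) : μ (closedBall x r) ≠ ⊤ :=
  ne_top_of_le_ne_top (ENNReal.mul_ne_top hC (ofReal_rpow_ne_top hr)) (h.measure_le x hx)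

theorem le_measure_half (h : AhlforsRegularAt μ Ω s c C (r / 2)) (hx : x ∈ Ω) :
    c * 2⁻¹ ^ s * ENNReal.ofReal r ^ s ≤ μ (closedBall x (r / 2)) := by
  have hhalf : ENNReal.ofReal (r / 2) ^ s = 2⁻¹ ^ s * ENNReal.ofReal r ^ s := by
    rw [ENNReal.ofReal_div_of_pos two_pos, ENNReal.ofReal_ofNat, div_eq_mul_inv, mul_comm,
      ENNReal.mul_rpow_of_ne_top (by simp) ENNReal.ofReal_ne_top]
  rw [mul_assoc, ← hhalf]
  exact h.le_measure x hx

theorem of_ofReal {c C : ℝ} (hc : 0 ≤ c) (hC : 0 ≤ C) (hr : 0 < r)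
    (h : ∀ x ∈ Ω, ENNReal.ofReal (c * r ^ s) ≤ μ (closedBall x r) ∧
      μ (closedBall x r) ≤ ENNReal.ofReal (C * r ^ s)) :
    AhlforsRegularAt μ Ω s (ENNReal.ofReal c) (ENNReal.ofReal C) r := by
  simp only [ENNReal.ofReal_mul hc, ENNReal.ofReal_mul hC, ← ENNReal.ofReal_rpow_of_pos hr] at h
  exact ⟨fun x hx => (h x hx).1, fun x hx => (h x hx).2⟩

end AhlforsRegularAt

theorem doubleAvg_mul_measure_sq (hW : Measurable fun p : X × X => W p.1 p.2)
    (h0 : μ (closedBall x r) ≠ 0) (htop : μ (closedBall x r) ≠ ⊤) :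
    doubleAvg μ W x r * μ (closedBall x r) ^ 2 =
      ∫⁻ y in closedBall x r, ∫⁻ z in closedBall x r, W z y ∂μ ∂μ := by
  have : IsFiniteMeasure (μ.restrict (closedBall x r)) := isFiniteMeasure_restrict.2 htop
  rw [← lintegral_lintegral_swap hW.aemeasurable, doubleAvg]
  calc _ = (μ (closedBall x r))⁻¹ * μ (closedBall x r) *
        ((μ (closedBall x r))⁻¹ * μ (closedBall x r)) *
          ∫⁻ z in closedBall x r, ∫⁻ y in closedBall x r, W z y ∂μ ∂μ := by ring
    _ = _ := by rw [ENNReal.inv_mul_cancel h0 htop, one_mul, one_mul]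

theorem gauge_mul_setLIntegral_le_gaugeEnergyDensity (hreg : AhlforsRegularAt μ Ω s c C r)
    (hr : 0 < r) (hc : c ≠ 0) (hC : C ≠ ⊤) (hΩ : closedBall x (r / 2) ⊆ Ω)
    (hy : y ∈ closedBall x (r / 2)) (hζ : ζ (closedBall x r) ≤ b * ζ (closedBall y r)) :
    ζ (closedBall x r) * ∫⁻ z in closedBall x (r / 2), W z y ∂μ ≤
      b * C * (ENNReal.ofReal r ^ s) ^ 2 * gaugeEnergyDensity μ Ω s W ζ r y := by
  have hsub : closedBall x (r / 2) ⊆ closedBall y r ∩ Ω :=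
    subset_inter (closedBall_subset_closedBall' (by
      rw [mem_closedBall, dist_comm] at hy; linarith)) hΩ
  set V := ENNReal.ofReal r ^ s
  set m := μ (closedBall y r)
  set J := ∫⁻ z in closedBall y r ∩ Ω, W z y ∂μ
  have hV : V * V⁻¹ = 1 := ENNReal.mul_inv_cancel (ofReal_rpow_pos hr).ne' (ofReal_rpow_ne_top hr)
  have hm : m * m⁻¹ = 1 :=
    ENNReal.mul_inv_cancel (hreg.measure_pos hr hc (hΩ hy)).ne' (hreg.measure_ne_top hr hC (hΩ hy))
  calc ζ (closedBall x r) * ∫⁻ z in closedBall x (r / 2), W z y ∂μ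
      ≤ b * ζ (closedBall y r) * J := mul_le_mul' hζ (lintegral_mono_set hsub)
    _ = b * ζ (closedBall y r) * J * (V * V⁻¹) * (m * m⁻¹) := by rw [hV, hm, mul_one, mul_one]
    _ ≤ b * ζ (closedBall y r) * J * (V * V⁻¹) * (C * V * m⁻¹) := by
        gcongr; exact hreg.measure_le y (hΩ hy)
    _ = b * C * V ^ 2 * (V⁻¹ * ζ (closedBall y r) * (m⁻¹ * J)) := by ring

variable [OpensMeasurableSpace X]

theorem doubleAvg_mul_gauge_le_withDensity (hreg : AhlforsRegularAt μ Ω s c C r)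
    (hreg_half : AhlforsRegularAt μ Ω s c C (r / 2)) (hr : 0 < r) (hc : c ≠ 0) (hC : C ≠ ⊤)
    (hb : b ≠ ⊤) (hW : Measurable fun p : X × X => W p.1 p.2) (hΩ : closedBall x (r / 2) ⊆ Ω)
    (hζ : ∀ y ∈ closedBall x (r / 2), ζ (closedBall x r) ≤ b * ζ (closedBall y r)) :
    (c * 2⁻¹ ^ s) ^ 2 * (doubleAvg μ W x (r / 2) * ζ (closedBall x r)) ≤
      b * C * μ.withDensity (gaugeEnergyDensity μ Ω s W ζ r) (closedBall x (r / 2)) := by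
  have hx : x ∈ Ω := hΩ (mem_closedBall_self (half_pos hr).le)
  have hm0 := (hreg_half.measure_pos (half_pos hr) hc hx).ne'
  have hmtop := hreg_half.measure_ne_top (half_pos hr) hC hx
  have hm := hreg_half.le_measure_half hx
  have hV : (ENNReal.ofReal r ^ s) ^ 2 ≠ ⊤ := ENNReal.pow_ne_top (ofReal_rpow_ne_top hr)
  rw [withDensity_apply _ measurableSet_closedBall,
    ← ENNReal.mul_le_mul_iff_right (pow_ne_zero 2 (ofReal_rpow_pos hr).ne') hV]
  set V := ENNReal.ofReal r ^ s
  set B := closedBall x (r / 2)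
  calc V ^ 2 * ((c * 2⁻¹ ^ s) ^ 2 * (doubleAvg μ W x (r / 2) * ζ (closedBall x r)))
      = ζ (closedBall x r) * (doubleAvg μ W x (r / 2) * (c * 2⁻¹ ^ s * V) ^ 2) := by ring
    _ ≤ ζ (closedBall x r) * (doubleAvg μ W x (r / 2) * μ B ^ 2) := by gcongr
    _ = ζ (closedBall x r) * ∫⁻ y in B, ∫⁻ z in B, W z y ∂μ ∂μ := by
        rw [doubleAvg_mul_measure_sq hW hm0 hmtop]
    _ ≤ ∫⁻ y in B, ζ (closedBall x r) * ∫⁻ z in B, W z y ∂μ ∂μ := lintegral_const_mul_le _ _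
    _ ≤ ∫⁻ y in B, b * C * V ^ 2 * gaugeEnergyDensity μ Ω s W ζ r y ∂μ :=
        setLIntegral_mono' measurableSet_closedBall fun y hy =>
          gauge_mul_setLIntegral_le_gaugeEnergyDensity hreg hr hc hC hΩ hy (hζ y hy)
    _ = V ^ 2 * (b * C * ∫⁻ y in B, gaugeEnergyDensity μ Ω s W ζ r y ∂μ) := by
        rw [lintegral_const_mul' _ _ (ENNReal.mul_ne_top (ENNReal.mul_ne_top hb hC) hV)]
        ring

theorem caraPre_le_gaugeEnergy_div {t : ℝ≥0∞} {δ : ℝ} (hΩ : MeasurableSet Ω)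
    (hreg : AhlforsRegularAt μ Ω s c C r) (hreg_half : AhlforsRegularAt μ Ω s c C (r / 2))
    (hr : 0 < r) (hrδ : 2 * r ≤ δ) (hc : c ≠ 0) (hC : C ≠ ⊤) (hb : b ≠ ⊤) (hκ : κ ≠ 0)
    (hW : Measurable fun p : X × X => W p.1 p.2) (hpos : ∀ x, 0 < ζ (closedBall x r))
    (hcomp : ∀ x, ∀ y ∈ closedBall x (r / 2), ζ (closedBall x r) ≤ b * ζ (closedBall y r))
    (hAΩ : ∀ x ∈ A, closedBall x (r / 2) ⊆ Ω)
    (hκA : ∀ x ∈ A, κ ≤ t * doubleAvg μ W x (r / 2))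
    (hfin : t * ∫⁻ x in Ω, gaugeEnergyDensity μ Ω s W ζ r x ∂μ ≠ ⊤) :
    caraPre ζ δ A ≤ b * C * (t * ∫⁻ x in Ω, gaugeEnergyDensity μ Ω s W ζ r x ∂μ) /
      ((c * 2⁻¹ ^ s) ^ 2 * κ) := by
  set ν := (b * C * t) • μ.withDensity (gaugeEnergyDensity μ Ω s W ζ r) with hν
  have hνΩ : ν Ω = b * C * (t * ∫⁻ x in Ω, gaugeEnergyDensity μ Ω s W ζ r x ∂μ) := by
    rw [hν, Measure.smul_apply, withDensity_apply _ hΩ, smul_eq_mul, mul_assoc]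
  rw [← hνΩ]
  refine caraPre_le_measure_div hr.le hrδ (half_rpow_sq_mul_ne_zero hc hκ)
    (hνΩ ▸ ENNReal.mul_ne_top (ENNReal.mul_ne_top hb hC) hfin) hAΩ (fun x _ => hpos x)
    fun x hx => ?_
  calc (c * 2⁻¹ ^ s) ^ 2 * κ * ζ (closedBall x r)
      ≤ (c * 2⁻¹ ^ s) ^ 2 * (t * doubleAvg μ W x (r / 2)) * ζ (closedBall x r) := by
        gcongr; exact hκA x hx
    _ = t * ((c * 2⁻¹ ^ s) ^ 2 * (doubleAvg μ W x (r / 2) * ζ (closedBall x r))) := by ring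
    _ ≤ t * (b * C * μ.withDensity (gaugeEnergyDensity μ Ω s W ζ r) (closedBall x (r / 2))) := by
        gcongr t * ?_
        exact doubleAvg_mul_gauge_le_withDensity hreg hreg_half hr hc hC hb hW (hAΩ x hx)
          (hcomp x)
    _ = ν (closedBall x (r / 2)) := by
        rw [hν, Measure.smul_apply, smul_eq_mul]
        ring

theorem caraMeas_lt_top_of_le_doubleAvg {ι : Type*} {l : Filter ι} {ε : ι → ℝ} {η : ι → ℝ≥0∞}
    {ρ : ℝ} (hΩ : MeasurableSet Ω) (hreg : ∀ᶠ r in 𝓝[>] (0 : ℝ), AhlforsRegularAt μ Ω s c C r)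
    (hc : c ≠ 0) (hC : C ≠ ⊤) (hb : b ≠ ⊤) (hκ : κ ≠ 0) (hε : Tendsto ε l (𝓝[>] 0))
    (hW : Measurable fun p : X × X => W p.1 p.2)
    (hpos : ∀ᶠ r in 𝓝[>] (0 : ℝ), ∀ x, 0 < ζ (closedBall x r))
    (hcomp : ∀ᶠ r in 𝓝[>] (0 : ℝ), ∀ x, ∀ y ∈ closedBall x (r / 2),
      ζ (closedBall x r) ≤ b * ζ (closedBall y r))
    (hρ : 0 < ρ) (hAΩ : ∀ x ∈ A, closedBall x ρ ⊆ Ω)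
    (hκA : ∀ᶠ n in l, ∀ x ∈ A, κ ≤ η n * doubleAvg μ W x (ε n / 2))
    (hfin : liminf (fun n => η n * ∫⁻ x in Ω, gaugeEnergyDensity μ Ω s W ζ (ε n) x ∂μ) l < ⊤) :
    caraMeas ζ A < ⊤ := by
  obtain ⟨M, hM, hMtop⟩ := exists_between hfin
  have hhalf : Tendsto (fun r : ℝ => r / 2) (𝓝[>] 0) (𝓝[>] 0) := by
    refine tendsto_nhdsWithin_iff.2
      ⟨?_, eventually_mem_nhdsWithin.mono fun r hr => half_pos (mem_Ioi.1 hr)⟩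
    simpa using (tendsto_id.div_const (2 : ℝ)).mono_left (nhdsWithin_le_nhds (a := (0 : ℝ)))
  suffices hle : caraMeas ζ A ≤ b * C * M / ((c * 2⁻¹ ^ s) ^ 2 * κ) from hle.trans_lt <|
    ENNReal.div_lt_top (ENNReal.mul_ne_top (ENNReal.mul_ne_top hb hC) hMtop.ne)
      (half_rpow_sq_mul_ne_zero hc hκ)
  refine iSup₂_le fun δ hδ => ?_
  have hscale : ∀ᶠ r in 𝓝[>] (0 : ℝ), r ∈ Ioo 0 (min (δ / 2) ρ) :=
    Ioo_mem_nhdsGT (lt_min (half_pos hδ) hρ)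
  obtain ⟨n, hnM, hnκ, ⟨hn0, hn⟩, hnreg, hnhalf, hnpos, hncomp⟩ :=
    ((frequently_lt_of_liminf_lt (by isBoundedDefault) hM).and_eventually <| hκA.and <|
      hε.eventually <| hscale.and <| hreg.and <| (hhalf.eventually hreg).and <|
        hpos.and hcomp).exists
  obtain ⟨hnδ, hnρ⟩ := lt_min_iff.1 hn
  refine (caraPre_le_gaugeEnergy_div hΩ hnreg hnhalf hn0 (by linarith) hc hC hb hκ hW hnpos hncomp
    (fun x hx => (closedBall_subset_closedBall (by linarith)).trans (hAΩ x hx)) hnκ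
    (hnM.trans hMtop).ne).trans ?_
  gcongr

end Energy

section LevelSets

variable {X : Type*} [MetricSpace X]

/-- The points `x` of `Ω` whose closed ball of radius `1 / (k + 1)` lies in `Ω` and at which
`u n ≥ k⁻¹` for all `n ≥ k`; a uniform version of `liminf u > 0`. For `k = 0` the threshold is
`0⁻¹ = ∞`. -/
def liminfLevelSet (Ω : Set X) (u : ℕ → X → ℝ≥0∞) (k : ℕ) : Set X :=
  {x ∈ Ω | closedBall x (1 / ((k : ℝ) + 1)) ⊆ Ω ∧ ∀ n ≥ k, (k : ℝ≥0∞)⁻¹ ≤ u n x}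

theorem setOf_liminf_pos_eq_iUnion_liminfLevelSet {Ω : Set X} (hΩ : IsOpen Ω)
    (u : ℕ → X → ℝ≥0∞) :
    {x ∈ Ω | 0 < liminf (fun n => u n x) atTop} = ⋃ k, liminfLevelSet Ω u k := by
  ext x
  refine ⟨fun ⟨hx, hpos⟩ => ?_, fun h => ?_⟩
  · obtain ⟨a, ha0, ha⟩ := exists_between hpos
    obtain ⟨N, hN⟩ := eventually_atTop.1 (eventually_lt_of_lt_liminf ha)
    have hball : ∀ᶠ k : ℕ in atTop, closedBall x (1 / ((k : ℝ) + 1)) ⊆ Ω :=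
      tendsto_one_div_add_atTop_nhds_zero_nat.eventually
        (eventually_closedBall_subset (hΩ.mem_nhds hx))
    have hinv : ∀ᶠ k : ℕ in atTop, (k : ℝ≥0∞)⁻¹ < a :=
      ENNReal.tendsto_inv_nat_nhds_zero.eventually_lt_const ha0
    obtain ⟨k, hk, hka, hNk⟩ := (hball.and (hinv.and (eventually_ge_atTop N))).exists
    exact mem_iUnion.2 ⟨k, hx, hk, fun n hn => (hka.trans (hN n (hNk.trans hn))).le⟩
  · obtain ⟨k, hx, -, hk⟩ := mem_iUnion.1 h
    have hle : (k : ℝ≥0∞)⁻¹ ≤ liminf (fun n => u n x) atTop :=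
      le_liminf_of_le (by isBoundedDefault) (eventually_atTop.2 ⟨k, hk⟩)
    exact ⟨hx, (ENNReal.inv_pos.2 (ENNReal.natCast_ne_top k)).trans_le hle⟩

end LevelSets

theorem eventually_nhdsGT_zero_of_forall_ofReal_lt {p : ℝ → Prop} {R : ℝ≥0∞} (hR : 0 < R)
    (h : ∀ r : ℝ, 0 < r → ENNReal.ofReal r < R → p r) : ∀ᶠ r in 𝓝[>] (0 : ℝ), p r := by
  have hlt : ∀ᶠ r in 𝓝[>] (0 : ℝ), ENNReal.ofReal r < R :=
    ((ENNReal.continuous_ofReal.tendsto 0).mono_left nhdsWithin_le_nhds).eventually_lt_const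
      (by simpa using hR)
  filter_upwards [hlt, self_mem_nhdsWithin] with r hrR hr0 using h r hr0 hrR

theorem statement10_general {X : Type*} [MetricSpace X] [MeasurableSpace X]
    [OpensMeasurableSpace X] {Ω : Set X} (hΩ : IsOpen Ω) {μ : Measure X} {s : ℝ}
    (hAhl : ∃ c C : ℝ, 0 < c ∧ 0 < C ∧ ∀ x ∈ Ω, ∀ ρ : ℝ, 0 < ρ →
      ENNReal.ofReal ρ < ediam Ω →
      ENNReal.ofReal (c * ρ ^ s) ≤ μ (closedBall x ρ) ∧
        μ (closedBall x ρ) ≤ ENNReal.ofReal (C * ρ ^ s))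
    {ε : ℕ → ℝ} {η : ℕ → ℝ≥0∞} (hε : Tendsto ε atTop (𝓝[>] 0))
    {W : X → X → ℝ≥0∞} (hW : Measurable fun p : X × X => W p.1 p.2)
    {ζ : Set X → ℝ≥0∞} {I γ' lam' : ℝ≥0∞} (hI : 0 < I) (hγ' : 0 < γ') (hlam' : lam' ≠ ⊤)
    (hζfin : ∀ (x : X) (R : ℝ), 0 < R → ENNReal.ofReal R < I →
      0 < ζ (closedBall x R) ∧ ζ (closedBall x R) < ⊤)
    (hζcomp : ∀ (x y : X) (R : ℝ), 0 < R → ENNReal.ofReal R < γ' →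
      y ∈ closedBall x (R / 2) → ζ (closedBall x R) ≤ lam' * ζ (closedBall y R))
    (hfin : liminf (fun n => η n * ∫⁻ x in Ω, gaugeEnergyDensity μ Ω s W ζ (ε n) x ∂μ) atTop
      < ⊤) :
    (∃ F : ℕ → Set X,
      {x ∈ Ω | 0 < liminf (fun n => η n * doubleAvg μ W x (ε n / 2)) atTop} = ⋃ n, F n ∧
        ∀ n, caraMeas ζ (F n) < ⊤) ∧
    ∀ x ∈ Ω \ {x ∈ Ω | 0 < liminf (fun n => η n * doubleAvg μ W x (ε n / 2)) atTop},
      liminf (fun n => η n * doubleAvg μ W x (ε n / 2)) atTop = 0 := by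
  refine ⟨⟨_, setOf_liminf_pos_eq_iUnion_liminfLevelSet hΩ
    fun n x => η n * doubleAvg μ W x (ε n / 2), fun k => ?_⟩,
    fun x hx => nonpos_iff_eq_zero.1 (not_lt.1 fun hpos => hx.2 ⟨hx.1, hpos⟩)⟩
  have hζ := eventually_nhdsGT_zero_of_forall_ofReal_lt hI fun r hr hrI x => hζfin x r hr hrI
  rcases Ω.subsingleton_or_nontrivial with hsub | hnt
  · exact caraMeas_lt_top_of_subsingleton hΩ hsub (hζ.mono fun r h x => (h x).2) fun x hx => hx.1
  obtain ⟨c, C, hc, hC, hAhl⟩ := hAhl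
  have hreg := eventually_nhdsGT_zero_of_forall_ofReal_lt (ediam_pos_iff.2 hnt) fun r hr hrΩ =>
    AhlforsRegularAt.of_ofReal hc.le hC.le hr fun x hx => hAhl x hx r hr hrΩ
  have hcomp := eventually_nhdsGT_zero_of_forall_ofReal_lt hγ' fun r hr hrγ x y =>
    hζcomp x y r hr hrγ
  exact caraMeas_lt_top_of_le_doubleAvg hΩ.measurableSet hreg (ENNReal.ofReal_pos.2 hc).ne'
    ENNReal.ofReal_ne_top hlam' (ENNReal.inv_ne_zero.2 (ENNReal.natCast_ne_top k)) hε hW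
    (hζ.mono fun r h x => (h x).1) hcomp Nat.one_div_pos_of_nat (fun x hx => hx.2.1)
    (eventually_atTop.2 ⟨k, fun n hn x hx => hx.2.2 n hn⟩) hfin

/-- Part 2 of the abstract fine-property theorem: if the liminf of the weighted
`ζ`-energies is finite, then the set `D` where the liminf of the weighted double
averages at half scale is positive is `σ`-finite with respect to `ψ`, and this liminf
vanishes outside `D`. -/
theorem statement10 {X : Type*} [MetricSpace X] [MeasurableSpace X] [BorelSpace X]
    (Ω : Set X) (hΩ : IsOpen Ω) (μ : Measure X) (s : ℝ) (hs : 0 < s)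
    (hAhl : ∃ c C : ℝ, 0 < c ∧ 0 < C ∧ ∀ x ∈ Ω, ∀ ρ : ℝ, 0 < ρ →
      ENNReal.ofReal ρ < EMetric.diam Ω →
      ENNReal.ofReal (c * ρ ^ s) ≤ μ (closedBall x ρ) ∧
        μ (closedBall x ρ) ≤ ENNReal.ofReal (C * ρ ^ s))
    (ε η : ℕ → ℝ) (hε : ∀ n, 0 < ε n) (hη : ∀ n, 0 < η n)
    (hεlim : Tendsto ε atTop (𝓝 0))
    (W : X → X → ℝ≥0∞) (hWmeas : Measurable (fun p : X × X => W p.1 p.2))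
    (hWloc : ∀ x ∈ Ω, ∀ R : ℝ, 0 < R →
      ∫⁻ z in closedBall x R ∩ Ω, ∫⁻ y in closedBall x R ∩ Ω, W z y ∂μ ∂μ < ⊤)
    (ζ : Set X → ℝ≥0∞)
    (I γ γ' lam lam' : ℝ≥0∞) (hI : 0 < I) (hγ : 0 < γ) (hγ' : 0 < γ')
    (hlam : 0 < lam) (hlamtop : lam ≠ ⊤) (hlam' : 0 < lam') (hlam'top : lam' ≠ ⊤)
    (hζfin : ∀ (x : X) (R : ℝ), 0 < R → ENNReal.ofReal R < I →
      0 < ζ (closedBall x R) ∧ ζ (closedBall x R) < ⊤)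
    (hζdbl : ∀ (x : X) (R : ℝ), 0 < R → ENNReal.ofReal R < γ →
      ζ (closedBall x (5 * R)) ≤ lam * ζ (closedBall x R))
    (hζcomp : ∀ (x y : X) (R : ℝ), 0 < R → ENNReal.ofReal R < γ' →
      y ∈ closedBall x (R / 2) → ζ (closedBall x R) ≤ lam' * ζ (closedBall y R))
    (hζmeas : ∀ R : ℝ, 0 < R → AEMeasurable (fun x : X => ζ (closedBall x R)) μ)
    (hfin : liminf (fun n => ENNReal.ofReal (η n) *
            ∫⁻ x in Ω, (ENNReal.ofReal (ε n) ^ s)⁻¹ * ζ (closedBall x (ε n)) *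
              ((μ (closedBall x (ε n)))⁻¹ *
                ∫⁻ z in closedBall x (ε n) ∩ Ω, W z x ∂μ) ∂μ) atTop < ⊤) :
    (∃ F : ℕ → Set X,
      {x ∈ Ω | 0 < liminf (fun n =>
          ENNReal.ofReal (η n) * doubleAvg μ W x (ε n / 2)) atTop} = ⋃ n, F n ∧
        ∀ n, caraMeas ζ (F n) < ⊤) ∧
    ∀ x ∈ Ω \ {x ∈ Ω | 0 < liminf (fun n =>
          ENNReal.ofReal (η n) * doubleAvg μ W x (ε n / 2)) atTop},
      liminf (fun n => ENNReal.ofReal (η n) * doubleAvg μ W x (ε n / 2)) atTop = 0 := by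
  exact statement10_general hΩ hAhl (tendsto_nhdsWithin_iff.2 ⟨hεlim, .of_forall hε⟩) hWmeas hI hγ'
    hlam'top hζfin hζcomp hfin
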